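/- Let f be a multicritical circle map with irrational rotation number and return times q_n. There exists a constant C_1 > 1 depending only on f such that for each n ≥ 0 there exist points z_1, z_2, z_3, z_4, z_5 ∈ S^1 with z_{j+1} = f^{q_n}(z_j) for j = 1,…,4, satisfying C_1^{−1} ≤ |z_{i−1} − z_i|/|z_{i+1} − z_i| ≤ C_1 for i = 2, 3, 4, where |u − v| denotes the length of the arc between the consecutive points u and v. -/

import Mathlib

open Set Filter MeasureTheory

noncomputable section

/-- The Schwarzian derivative `Sf = (f''/f')' - (1/2) (f''/f')^2`. -/
def schwarzianDeriv (f : ℝ → ℝ) (x : ℝ) : ℝ :=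
  deriv (fun y => deriv (deriv f) y / deriv f y) x
    - (1 / 2) * (deriv (deriv f) x / deriv f x) ^ 2

/-- A multicritical circle map, described through its lift `F : ℝ → ℝ` to the real line.
It is an orientation-preserving `C^3` circle homeomorphism with finitely many critical
points `c 0, …, c (N-1)`, each of non-flat power-law type: near `c i` the derivative is
pinched between two multiples of `|x - c i| ^ (s i - 1)` with `s i > 1`, the Schwarzian
derivative is negative on a punctured neighborhood of each critical point, and
`log (F')` has bounded variation (bounded by `v`) off the critical neighborhoods. -/
structure MCM where
  /-- the lift of the circle map -/
  F : ℝ → ℝ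
  smooth : ContDiff ℝ 3 F
  mono : StrictMono F
  deg1 : ∀ x, F (x + 1) = F x + 1
  /-- number of critical points -/
  N : ℕ
  N_pos : 0 < N
  /-- the critical points (one representative in `[0,1)` for each) -/
  c : Fin N → ℝ
  c_mem : ∀ i, c i ∈ Set.Ico (0 : ℝ) 1
  c_inj : Function.Injective c
  isCrit : ∀ i, deriv F (c i) = 0
  critOnly : ∀ x, deriv F x = 0 → ∃ (i : Fin N) (k : ℤ), x = c i + (k : ℝ)
  /-- neighborhoods of the critical points -/
  W : Fin N → Set ℝ
  W_open : ∀ i, IsOpen (W i)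
  c_mem_W : ∀ i, c i ∈ W i
  /-- the criticalities (power-law exponents) -/
  s : Fin N → ℝ
  s_gt_one : ∀ i, 1 < s i
  al : Fin N → ℝ
  be : Fin N → ℝ
  al_pos : ∀ i, 0 < al i
  al_lt_be : ∀ i, al i < be i
  powerLaw : ∀ i, ∀ x ∈ W i, x ≠ c i →
    al i * |x - c i| ^ (s i - 1) < deriv F x ∧
      deriv F x < be i * |x - c i| ^ (s i - 1)
  negSchwarzian : ∀ i, ∀ x ∈ W i, x ≠ c i → schwarzianDeriv F x < 0
  /-- bound for the variation of `log DF` off the critical neighborhoods -/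
  v : ℝ
  v_pos : 0 < v
  logDF_var : eVariationOn (fun x => Real.log (deriv F x))
      (Set.Icc 0 1 \ ⋃ (i) (k : ℤ), (fun y => y + (k : ℝ)) '' W i) ≤ ENNReal.ofReal v

/-- The circle map with lift `F` has rotation number `ρ`. -/
def HasRotationNumber (F : ℝ → ℝ) (ρ : ℝ) : Prop :=
  Tendsto (fun n : ℕ => F^[n] 0 / n) atTop (nhds ρ)

/-- The Gauss map `x ↦ {1/x}`. -/
def gaussMap (x : ℝ) : ℝ := Int.fract x⁻¹

/-- Partial quotients `a_n` of the continued fraction expansion of `ρ ∈ (0,1)`. -/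
def cfDigit (ρ : ℝ) (n : ℕ) : ℕ := (⌊(gaussMap^[n] ρ)⁻¹⌋).toNat

/-- Return times: the denominators `q_n` of the convergents of `ρ`,
`q_0 = 1`, `q_1 = a_0`, `q_{n+1} = a_n q_n + q_{n-1}`. -/
def qDen (ρ : ℝ) : ℕ → ℕ
  | 0 => 1
  | 1 => cfDigit ρ 0
  | n + 2 => cfDigit ρ (n + 1) * qDen ρ (n + 1) + qDen ρ n

/-- Numerators `p_n` of the convergents of `ρ`:
`p_0 = 0`, `p_1 = 1`, `p_{n+1} = a_n p_n + p_{n-1}`. -/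
def pNum (ρ : ℝ) : ℕ → ℕ
  | 0 => 0
  | 1 => 1
  | n + 2 => cfDigit ρ (n + 1) * pNum ρ (n + 1) + pNum ρ n

lemma gauss_prop {ρ : ℝ} (hirr : Irrational ρ) (hmem : ρ ∈ Set.Ioo (0 : ℝ) 1) (n : ℕ) :
    Irrational (gaussMap^[n] ρ) ∧ gaussMap^[n] ρ ∈ Set.Ioo (0 : ℝ) 1 := by
  induction n with
  | zero => exact ⟨hirr, hmem⟩
  | succ n ih =>
    rw [Function.iterate_succ_apply']
    obtain ⟨h1, h2⟩ := ih
    have h3 : Irrational (gaussMap (gaussMap^[n] ρ)) := by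
      unfold gaussMap
      rw [← Int.self_sub_floor]
      exact (h1.inv).sub_intCast _
    refine ⟨h3, ?_, Int.fract_lt_one _⟩
    exact lt_of_le_of_ne (Int.fract_nonneg _) (fun h => h3.ne_zero h.symm)

lemma cfDigit_cast {ρ : ℝ} (hirr : Irrational ρ) (hmem : ρ ∈ Set.Ioo (0 : ℝ) 1) (n : ℕ) :
    (cfDigit ρ n : ℝ) = (gaussMap^[n] ρ)⁻¹ - gaussMap^[n+1] ρ := by
  obtain ⟨h1, h2⟩ := gauss_prop hirr hmem n
  rw [Function.iterate_succ_apply']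
  have h3 : 0 ≤ ⌊(gaussMap^[n] ρ)⁻¹⌋ := Int.floor_nonneg.2 (inv_nonneg.2 h2.1.le)
  have h4 : ((cfDigit ρ n : ℕ) : ℤ) = ⌊(gaussMap^[n] ρ)⁻¹⌋ := Int.toNat_of_nonneg h3
  have h5 : (cfDigit ρ n : ℝ) = (⌊(gaussMap^[n] ρ)⁻¹⌋ : ℝ) := by
    rw [← h4]; simp
  have h6 : gaussMap (gaussMap^[n] ρ) = Int.fract (gaussMap^[n] ρ)⁻¹ := rfl
  rw [h5, h6, ← Int.self_sub_floor]
  ring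

lemma cfDigit_pos {ρ : ℝ} (hirr : Irrational ρ) (hmem : ρ ∈ Set.Ioo (0 : ℝ) 1) (n : ℕ) :
    1 ≤ cfDigit ρ n := by
  obtain ⟨h1, h2⟩ := gauss_prop hirr hmem n
  unfold cfDigit
  have : 1 ≤ ⌊(gaussMap^[n] ρ)⁻¹⌋ := by
    rw [Int.le_floor]
    simpa using (one_le_inv₀ h2.1).2 h2.2.le
  omega

lemma qDen_pos {ρ : ℝ} (hirr : Irrational ρ) (hmem : ρ ∈ Set.Ioo (0 : ℝ) 1) (n : ℕ) :
    1 ≤ qDen ρ n ∧ 1 ≤ qDen ρ (n+1) := by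
  induction n with
  | zero => exact ⟨le_rfl, cfDigit_pos hirr hmem 0⟩
  | succ n ih =>
    refine ⟨ih.2, ?_⟩
    have : qDen ρ (n+1+1) = cfDigit ρ (n + 1) * qDen ρ (n + 1) + qDen ρ n := rfl
    rw [this]; omega

/-- the signed distance `q_n ρ - p_n`. -/
def thet (ρ : ℝ) (n : ℕ) : ℝ := qDen ρ n * ρ - pNum ρ n

lemma thet_succ {ρ : ℝ} (hirr : Irrational ρ) (hmem : ρ ∈ Set.Ioo (0 : ℝ) 1) (n : ℕ) :
    thet ρ (n+1) = - gaussMap^[n+1] ρ * thet ρ n := by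
  induction n with
  | zero =>
    have h := cfDigit_cast hirr hmem 0
    have h0 : ρ ≠ 0 := hirr.ne_zero
    simp only [thet, qDen, pNum]
    rw [h]
    simp only [Function.iterate_zero, id]
    push_cast
    field_simp
    ring
  | succ n ih =>
    have h := cfDigit_cast hirr hmem (n+1)
    obtain ⟨h1, h2⟩ := gauss_prop hirr hmem (n+1)
    have h0 := h1.ne_zero
    have e : thet ρ (n+1+1) = cfDigit ρ (n+1) * thet ρ (n+1) + thet ρ n := by
      simp only [thet, qDen, pNum]; push_cast; ring
    have e2 : thet ρ n = - (gaussMap^[n+1] ρ)⁻¹ * thet ρ (n+1) := by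
      rw [ih]; field_simp
    rw [e, h]
    linear_combination e2

lemma thet_sign {ρ : ℝ} (hirr : Irrational ρ) (hmem : ρ ∈ Set.Ioo (0 : ℝ) 1) (n : ℕ) :
    thet ρ n ≠ 0 ∧ thet ρ n * thet ρ (n+1) < 0 ∧ |thet ρ (n+1)| ≤ |thet ρ n| := by
  have h0 : ∀ n, thet ρ n ≠ 0 := by
    intro n
    induction n with
    | zero => simpa [thet, qDen, pNum] using hirr.ne_zero
    | succ n ih =>
      rw [thet_succ hirr hmem]
      exact mul_ne_zero (neg_ne_zero.2 (gauss_prop hirr hmem (n+1)).1.ne_zero) ih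
  obtain ⟨h1, h2⟩ := gauss_prop hirr hmem (n+1)
  refine ⟨h0 n, ?_, ?_⟩
  · rw [thet_succ hirr hmem]
    have : 0 < thet ρ n * thet ρ n := mul_self_pos.2 (h0 n)
    nlinarith [mul_pos this h2.1]
  · rw [thet_succ hirr hmem, abs_mul, abs_neg, abs_of_pos h2.1]
    nlinarith [abs_nonneg (thet ρ n), h2.2]

lemma det_cf (ρ : ℝ) (n : ℕ) :
    ((qDen ρ (n+1) : ℤ) * pNum ρ n - pNum ρ (n+1) * qDen ρ n) ^ 2 = 1 := by
  induction n with
  | zero => simp [qDen, pNum]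
  | succ n ih =>
    rw [← ih]
    simp only [qDen, pNum]; push_cast; ring

lemma best_approx {ρ : ℝ} (hirr : Irrational ρ) (hmem : ρ ∈ Set.Ioo (0 : ℝ) 1) (n : ℕ)
    (m : ℕ) (k : ℤ) (hm : m < qDen ρ n) (hmk : m ≠ 0 ∨ k ≠ 0) :
    |thet ρ n| ≤ |m * ρ - k| := by
  cases n with
  | zero =>
    have : m = 0 := by simp [qDen] at hm; exact hm
    subst this
    have hk : k ≠ 0 := by simpa using hmk
    have : (1:ℝ) ≤ |(k:ℝ)| := by exact_mod_cast Int.one_le_abs hk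
    simp only [thet, qDen, pNum]
    simp [abs_of_pos hmem.1]
    linarith [hmem.2]
  | succ n =>
    obtain ⟨e, he⟩ : ∃ e : ℤ, e = (qDen ρ (n+1) : ℤ) * pNum ρ n - pNum ρ (n+1) * qDen ρ n := ⟨_, rfl⟩
    have he2 : e ^ 2 = 1 := by rw [he]; exact det_cf ρ n
    obtain ⟨hq, hq1⟩ := qDen_pos hirr hmem n
    obtain ⟨t0, t1, t2⟩ := thet_sign hirr hmem n
    have E1 : thet ρ (n+1) = qDen ρ (n+1) * ρ - pNum ρ (n+1) := rfl
    have E0 : thet ρ n = qDen ρ n * ρ - pNum ρ n := rfl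
    generalize thet ρ (n+1) = th1 at *
    generalize thet ρ n = th0 at *
    generalize qDen ρ (n+1) = q1 at *
    generalize qDen ρ n = q0 at *
    generalize pNum ρ (n+1) = p1 at *
    generalize pNum ρ n = p0 at *
    obtain ⟨u, hu⟩ : ∃ u : ℤ, u = e * (m * p0 - k * q0) := ⟨_, rfl⟩
    obtain ⟨v, hv⟩ : ∃ v : ℤ, v = e * (q1 * k - p1 * m) := ⟨_, rfl⟩
    have hm1 : (m:ℤ) = u * q1 + v * q0 := by
      rw [hu, hv]
      linear_combination (-(m:ℤ)) * he2 + e * m * he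
    have hk1 : k = u * p1 + v * p0 := by
      rw [hu, hv]
      linear_combination (-k) * he2 + e * k * he
    have hmain : (m:ℝ) * ρ - k = u * th1 + v * th0 := by
      have a1 : (m:ℝ) = u * q1 + v * q0 := by exact_mod_cast hm1
      have a2 : (k:ℝ) = u * p1 + v * p0 := by exact_mod_cast hk1
      rw [a1, a2, E1, E0]; ring
    have hv0 : v ≠ 0 := by
      intro h
      rw [h] at hm1 hk1
      simp only [zero_mul, add_zero] at hm1 hk1
      have : u = 0 := by
        by_contra hu0
        rcases lt_or_gt_of_ne hu0 with h | h <;> nlinarith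
      rw [this] at hm1 hk1
      simp at hm1 hk1
      omega
    have huv : u * v ≤ 0 := by
      by_contra hpos
      push Not at hpos
      rcases pos_and_pos_or_neg_and_neg_of_mul_pos hpos with ⟨a, b⟩ | ⟨a, b⟩ <;> nlinarith
    rw [hmain]
    have hv1 : (1:ℝ) ≤ |(v:ℝ)| := by exact_mod_cast Int.one_le_abs hv0
    have hs : 0 ≤ ((u:ℝ) * th1) * (v * th0) := by
      have : (u:ℝ) * v ≤ 0 := by exact_mod_cast huv
      nlinarith
    have : |(u:ℝ) * th1 + v * th0| = |(u:ℝ) * th1| + |v * th0| := abs_add_eq_add_abs_iff _ _ |>.2 (by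
      rcases mul_nonneg_iff.1 hs with h | h
      · exact Or.inl h
      · exact Or.inr h)
    rw [this, abs_mul (v:ℝ)]
    nlinarith [abs_nonneg ((u:ℝ) * th1), abs_nonneg th0]
lemma MCM.lt_of (f : MCM) {ρ : ℝ} (hrot : HasRotationNumber f.F ρ) (m : ℕ) (k : ℤ) :
    ((m:ℝ) * ρ < k → ∀ x, f.F^[m] x < x + k) ∧ ((k:ℝ) < m * ρ → ∀ x, x + k < f.F^[m] x) := by
  let g : CircleDeg1Lift := ⟨⟨f.F, f.mono.monotone⟩, f.deg1⟩
  have hg : ⇑g = f.F := rfl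
  have hτ : CircleDeg1Lift.translationNumber g = ρ := by
    have h := CircleDeg1Lift.tendsto_translation_number₀ g
    refine tendsto_nhds_unique h ?_
    simp only [CircleDeg1Lift.coe_pow, hg]
    exact hrot
  have hτm := CircleDeg1Lift.translationNumber_pow g m
  rw [hτ] at hτm
  constructor
  · intro h x
    have := CircleDeg1Lift.map_lt_of_translationNumber_lt_int (g ^ m) (n := k) (by rw [hτm]; exact h) x
    rwa [CircleDeg1Lift.coe_pow, hg] at this
  · intro h x
    have := CircleDeg1Lift.lt_map_of_int_lt_translationNumber (g ^ m) (n := k) (by rw [hτm]; exact h) x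
    rwa [CircleDeg1Lift.coe_pow, hg] at this

lemma MCM.add_int (f : MCM) (x : ℝ) (k : ℤ) : f.F (x + k) = f.F x + k := by
  let g : CircleDeg1Lift := ⟨⟨f.F, f.mono.monotone⟩, f.deg1⟩
  exact g.map_add_int x k

lemma MCM.iter_add_int (f : MCM) (m : ℕ) (x : ℝ) (k : ℤ) : f.F^[m] (x + k) = f.F^[m] x + k := by
  let g : CircleDeg1Lift := ⟨⟨f.F, f.mono.monotone⟩, f.deg1⟩
  have := (g ^ m).map_add_int x k
  rwa [CircleDeg1Lift.coe_pow] at this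

/-- non-overlap, in terms of the iterates; `x` arbitrary -/
lemma MCM.disj_aux (f : MCM) {ρ : ℝ} (hirr : Irrational ρ) (hrot : HasRotationNumber f.F ρ)
    (q : ℕ) (p : ℤ) (m : ℕ) (k : ℤ) (hm : m < q)
    (hbest : |q * ρ - p| ≤ |m * ρ - k|) (x : ℝ) :
    (0 < q * ρ - p → (f.F^[q] x - p ≤ f.F^[m] x - k ∨ f.F^[m] (f.F^[q] x - p) - k ≤ x)) ∧
    (q * ρ - p < 0 → (f.F^[m] x - k ≤ f.F^[q] x - p ∨ x ≤ f.F^[m] (f.F^[q] x - p) - k)) := by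
  obtain ⟨A1, A2⟩ := f.lt_of hrot (q - m) (p - k)
  obtain ⟨B1, B2⟩ := f.lt_of hrot (m + q) (p + k)
  have hcast : ((q - m : ℕ) : ℝ) = (q:ℝ) - m := by push_cast [hm.le]; ring
  have hq : f.F^[q] x = f.F^[q-m] (f.F^[m] x) := by
    rw [← Function.iterate_add_apply]; congr 2; omega
  have hmq : f.F^[m] (f.F^[q] x - p) = f.F^[m+q] x - p := by
    have := f.iter_add_int m (f.F^[q] x) (-p)
    push_cast at this
    rw [← sub_eq_add_neg, ← sub_eq_add_neg] at this
    rw [this, Function.iterate_add_apply]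
  have hir1 : ((q - m : ℕ) : ℝ) * ρ ≠ ((p - k : ℤ):ℝ) := by
    have h1 : Irrational (((q - m : ℕ) : ℝ) * ρ) := hirr.natCast_mul (by omega)
    exact h1.ne_int _
  have hir2 : ((m + q : ℕ) : ℝ) * ρ ≠ ((p + k : ℤ):ℝ) := by
    have h1 : Irrational (((m + q : ℕ) : ℝ) * ρ) := hirr.natCast_mul (by omega)
    exact h1.ne_int _
  rw [hcast] at A1 A2 hir1
  push_cast at A1 A2 B1 B2 hir1 hir2
  rw [hmq, hq]
  constructor
  · intro h
    rw [abs_of_pos h] at hbest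
    rcases le_abs'.1 hbest with h1 | h1
    · right
      have := B1 (lt_of_le_of_ne (by linarith) hir2) x
      linarith
    · left
      have := A1 (lt_of_le_of_ne (by linarith) hir1) (f.F^[m] x)
      linarith
  · intro h
    rw [abs_of_neg h] at hbest
    rcases le_abs'.1 hbest with h1 | h1
    · left
      have := A2 (lt_of_le_of_ne (by linarith) hir1.symm) (f.F^[m] x)
      linarith
    · right
      have := B2 (lt_of_le_of_ne (by linarith) hir2.symm) x
      linarith

/-- a family of intervals `[l i, r i]`, `i < q`, non-overlapping modulo `1`. -/
def NonOv (q : ℕ) (l r : ℕ → ℝ) : Prop :=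
  (∀ i < q, l i < r i) ∧
  ∀ i < q, ∀ j < q, ∀ k : ℤ, (i ≠ j ∨ k ≠ 0) → r i ≤ l j + k ∨ r j + k ≤ l i

lemma NonOv.of_le {q : ℕ} {l r : ℕ → ℝ} (h0 : ∀ i < q, l i < r i)
    (h : ∀ i < q, ∀ j < q, ∀ k : ℤ, i ≤ j → (i ≠ j ∨ k ≠ 0) → r i ≤ l j + k ∨ r j + k ≤ l i) :
    NonOv q l r := by
  refine ⟨h0, fun i hi j hj k hk => ?_⟩
  rcases le_total i j with hij | hij
  · exact h i hi j hj k hij hk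
  · rcases h j hj i hi (-k) hij (by rcases hk with h | h; exact Or.inl h.symm; exact Or.inr (by omega)) with h | h
    · right; push_cast at h; linarith
    · left; push_cast at h; linarith

lemma MCM.nonOv (f : MCM) {ρ : ℝ} (hirr : Irrational ρ) (hrot : HasRotationNumber f.F ρ)
    (q : ℕ) (p : ℤ) (hth : (q:ℝ) * ρ - p ≠ 0)
    (hbest : ∀ (m : ℕ) (k : ℤ), m < q → (m ≠ 0 ∨ k ≠ 0) → |(q:ℝ) * ρ - p| ≤ |m * ρ - k|) (x : ℝ) :
    NonOv q (fun i => f.F^[i] (min x (f.F^[q] x - p))) (fun i => f.F^[i] (max x (f.F^[q] x - p))) := by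
  have hmono : ∀ i, StrictMono (f.F^[i]) := fun i => f.mono.iterate i
  obtain ⟨S1, S2⟩ := f.lt_of hrot q p
  have hcomm : ∀ i, f.F^[i] (f.F^[q] x - p) = f.F^[q] (f.F^[i] x) - p := by
    intro i
    have := f.iter_add_int i (f.F^[q] x) (-p)
    push_cast at this
    rw [← sub_eq_add_neg, ← sub_eq_add_neg] at this
    rw [this, ← Function.iterate_add_apply, ← Function.iterate_add_apply, add_comm]
  have hsplit : ∀ i j y, i ≤ j → f.F^[j] y = f.F^[j-i] (f.F^[i] y) := by
    intro i j y hij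
    rw [← Function.iterate_add_apply]; congr 2; omega
  rcases lt_or_gt_of_ne hth with hneg | hpos
  · have hlt : f.F^[q] x - p < x := by linarith [S1 (by linarith) x]
    rw [min_eq_right hlt.le, max_eq_left hlt.le]
    refine NonOv.of_le (fun i _ => hmono i hlt) ?_
    intro i hi j hj k hij hk
    have := (f.disj_aux hirr hrot q p (j - i) (-k) (by omega)
      (hbest (j-i) (-k) (by omega) (by omega)) (f.F^[i] x)).2 hneg
    rw [← hcomm, ← hsplit i j _ hij, ← hsplit i j _ hij] at this
    push_cast at this
    rcases this with h | h
    · right; linarith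
    · left; linarith
  · have hlt : x < f.F^[q] x - p := by linarith [S2 (by linarith) x]
    rw [min_eq_left hlt.le, max_eq_right hlt.le]
    refine NonOv.of_le (fun i _ => hmono i hlt) ?_
    intro i hi j hj k hij hk
    have := (f.disj_aux hirr hrot q p (j - i) (-k) (by omega)
      (hbest (j-i) (-k) (by omega) (by omega)) (f.F^[i] x)).1 hpos
    rw [← hcomm, ← hsplit i j _ hij, ← hsplit i j _ hij] at this
    push_cast at this
    rcases this with h | h
    · left; linarith
    · right; linarith

lemma NonOv.sum_le {q : ℕ} {l r : ℕ → ℝ} (h : NonOv q l r) :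
    ∑ i ∈ Finset.range q, (r i - l i) ≤ 1 := by
  obtain ⟨h0, h1⟩ := h
  rcases Nat.eq_zero_or_pos q with hq | hq
  · subst hq; simp
  let kk : ℕ → ℤ := fun i => -⌊l i - l 0⌋
  have hk : ∀ i, l 0 ≤ l i + kk i ∧ l i + kk i < l 0 + 1 := by
    intro i
    have a := Int.floor_le (l i - l 0)
    have b := Int.lt_floor_add_one (l i - l 0)
    simp only [kk]; push_cast
    constructor <;> linarith
  have hr : ∀ i < q, r i + kk i ≤ l 0 + 1 := by
    intro i hi
    have h2 := h1 0 hq i hi (kk i - 1)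
    by_cases hc : (0 ≠ i ∨ kk i - 1 ≠ 0)
    · rcases h2 hc with h | h
      · push_cast at h; linarith [(hk i).2, h0 0 hq]
      · push_cast at h; linarith
    · exfalso
      push Not at hc
      obtain ⟨rfl, hc⟩ := hc
      simp [kk] at hc
  have hdisj : Set.PairwiseDisjoint (↑(Finset.range q)) (fun i => Set.Ioo (l i + kk i) (r i + kk i)) := by
    intro i hi j hj hij
    simp only [Finset.coe_range, Set.mem_Iio] at hi hj
    rw [Function.onFun, Set.disjoint_left]
    intro t ht ht'
    rcases h1 i hi j hj (kk j - kk i) (Or.inl hij) with h | h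
    · push_cast at h; linarith [ht.2, ht'.1]
    · push_cast at h; linarith [ht.1, ht'.2]
  have hmeas := measure_biUnion_finset (μ := volume) hdisj (fun i _ => measurableSet_Ioo)
  have hsub : (⋃ i ∈ Finset.range q, Set.Ioo (l i + kk i) (r i + kk i)) ⊆ Set.Icc (l 0) (l 0 + 1) := by
    intro t ht
    simp only [Set.mem_iUnion, Finset.mem_range] at ht
    obtain ⟨i, hi, ht⟩ := ht
    exact ⟨by linarith [(hk i).1, ht.1], by linarith [hr i hi, ht.2]⟩
  have hle := measure_mono (μ := volume) hsub
  rw [hmeas, Real.volume_Icc] at hle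
  simp only [Real.volume_Ioo] at hle
  rw [← ENNReal.ofReal_sum_of_nonneg] at hle
  · rw [ENNReal.ofReal_le_ofReal_iff (by linarith)] at hle
    simpa using hle
  · intro i hi
    have := h0 i (Finset.mem_range.1 hi)
    linarith

open Classical in
lemma NonOv.count_le {q : ℕ} {l r : ℕ → ℝ} (h : NonOv q l r) (c : ℝ) :
    ((Finset.range q).filter (fun i => ∃ k : ℤ, c + k ∈ Set.Icc (l i) (r i))).card ≤ 2 := by
  obtain ⟨h0, h1⟩ := h
  have hsub : (Finset.range q).filter (fun i => ∃ k : ℤ, c + k ∈ Set.Icc (l i) (r i)) ⊆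
      (Finset.range q).filter (fun i => ∃ k : ℤ, c + k ∈ Set.Ico (l i) (r i)) ∪
      (Finset.range q).filter (fun i => ∃ k : ℤ, c + k ∈ Set.Ioc (l i) (r i)) := by
    intro i hi
    simp only [Finset.mem_union, Finset.mem_filter, Finset.mem_range] at hi ⊢
    obtain ⟨hi, k, hk⟩ := hi
    rcases hk.2.lt_or_eq with h | h
    · exact Or.inl ⟨hi, k, hk.1, h⟩
    · exact Or.inr ⟨hi, k, by rw [h]; exact h0 i hi, hk.2⟩
  refine (Finset.card_le_card hsub).trans ((Finset.card_union_le _ _).trans ?_)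
  have e1 : ((Finset.range q).filter (fun i => ∃ k : ℤ, c + k ∈ Set.Ico (l i) (r i))).card ≤ 1 := by
    rw [Finset.card_le_one]
    intro i hi j hj
    simp only [Finset.mem_filter, Finset.mem_range] at hi hj
    obtain ⟨hi, k, hk⟩ := hi
    obtain ⟨hj, k', hk'⟩ := hj
    by_contra hij
    rcases h1 i hi j hj (k - k') (Or.inl hij) with h | h
    · push_cast at h; linarith [hk.2, hk'.1]
    · push_cast at h; linarith [hk.1, hk'.2]
  have e2 : ((Finset.range q).filter (fun i => ∃ k : ℤ, c + k ∈ Set.Ioc (l i) (r i))).card ≤ 1 := by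
    rw [Finset.card_le_one]
    intro i hi j hj
    simp only [Finset.mem_filter, Finset.mem_range] at hi hj
    obtain ⟨hi, k, hk⟩ := hi
    obtain ⟨hj, k', hk'⟩ := hj
    by_contra hij
    rcases h1 i hi j hj (k - k') (Or.inl hij) with h | h
    · push_cast at h; linarith [hk.2, hk'.1]
    · push_cast at h; linarith [hk.1, hk'.2]
  omega
lemma mono_help {g g' : ℝ → ℝ} {a b : ℝ} (hab : a ≤ b)
    (h : ∀ t ∈ Set.Icc a b, HasDerivAt g (g' t) t) (h0 : ∀ t ∈ Set.Icc a b, 0 ≤ g' t) :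
    g a ≤ g b := by
  refine monotoneOn_of_deriv_nonneg (convex_Icc a b)
    (fun t ht => (h t ht).continuousAt.continuousWithinAt)
    (fun t ht => (h t (interior_subset ht)).differentiableAt.differentiableWithinAt)
    (fun t ht => ?_) (Set.left_mem_Icc.2 hab) (Set.right_mem_Icc.2 hab) hab
  rw [(h t (interior_subset ht)).deriv]
  exact h0 t (interior_subset ht)

lemma koebe {F : ℝ → ℝ} (hF : ContDiff ℝ 3 F) {x y : ℝ} (hxy : x ≤ y)
    (hpos : ∀ t ∈ Set.Icc x y, 0 < deriv F t)
    (hS : ∀ t ∈ Set.Icc x y, schwarzianDeriv F t < 0) :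
    √(deriv F x) * √(deriv F y) * (y - x) ≤ F y - F x := by
  have d0 : ∀ t, HasDerivAt F (deriv F t) t := fun t =>
    (hF.differentiable (by norm_num) t).hasDerivAt
  have hF1 : ContDiff ℝ 2 (deriv F) := by
    have : ContDiff ℝ (2+1) F := by convert hF using 1; norm_num
    exact (contDiff_succ_iff_deriv.1 this).2.2
  have hF2 : ContDiff ℝ 1 (deriv (deriv F)) := by
    have : ContDiff ℝ (1+1) (deriv F) := by convert hF1 using 1; norm_num
    exact (contDiff_succ_iff_deriv.1 this).2.2
  have d1 : ∀ t, HasDerivAt (deriv F) (deriv (deriv F) t) t := fun t =>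
    (hF1.differentiable (by norm_num) t).hasDerivAt
  have d2 : ∀ t, HasDerivAt (deriv (deriv F)) (deriv (deriv (deriv F)) t) t := fun t =>
    (hF2.differentiable (by norm_num) t).hasDerivAt
  let p : ℝ → ℝ := fun y => deriv (deriv F) y / deriv F y
  have dp : ∀ t ∈ Set.Icc x y, HasDerivAt p (deriv p t) t := fun t ht =>
    ((d2 t).div (d1 t) (hpos t ht).ne').differentiableAt.hasDerivAt
  let r : ℝ → ℝ := fun t => √(deriv F t)
  have rpos : ∀ t ∈ Set.Icc x y, 0 < r t := fun t ht => Real.sqrt_pos.2 (hpos t ht)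
  have rsq : ∀ t ∈ Set.Icc x y, deriv F t = r t ^ 2 := fun t ht => (Real.sq_sqrt (hpos t ht).le).symm
  have dr : ∀ t ∈ Set.Icc x y, HasDerivAt r (p t * r t / 2) t := by
    intro t ht
    have := (d1 t).sqrt (hpos t ht).ne'
    refine HasDerivAt.congr_deriv this ?_
    have h1 := rsq t ht
    have h2 := rpos t ht
    have h3 : √(deriv F t) = r t := rfl
    simp only [p]
    rw [h3, h1]
    field_simp
  have Fmono : ∀ t ∈ Set.Icc x y, F x ≤ F t := by
    intro t ht
    exact mono_help ht.1 (fun s _ => d0 s) (fun s hs => (hpos s ⟨hs.1, hs.2.trans ht.2⟩).le)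
  let w : ℝ → ℝ := fun t => r t - (F t - F x) * p t / (2 * r t)
  have dw : ∀ t ∈ Set.Icc x y, HasDerivAt w (-(F t - F x) / (2 * r t) * schwarzianDeriv F t) t := by
    intro t ht
    have h2 := rpos t ht
    have := (dr t ht).sub ((((d0 t).sub_const (F x)).mul (dp t ht)).div ((dr t ht).const_mul 2)
      (by positivity))
    refine HasDerivAt.congr_deriv this ?_
    have h4 : schwarzianDeriv F t = deriv p t - (1/2) * (p t)^2 := rfl
    rw [h4, rsq t ht]
    simp only [Pi.mul_apply]
    field_simp
    ring
  have hw : ∀ t ∈ Set.Icc x y, r x ≤ w t := by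
    intro t ht
    have : w x ≤ w t := by
      refine mono_help ht.1 (fun s hs => dw s ⟨hs.1, hs.2.trans ht.2⟩) (fun s hs => ?_)
      have hs' : s ∈ Set.Icc x y := ⟨hs.1, hs.2.trans ht.2⟩
      have a1 := Fmono s hs'
      have a2 := hS s hs'
      have a3 := rpos s hs'
      have a4 : -(F s - F x) / (2 * r s) ≤ 0 := div_nonpos_of_nonpos_of_nonneg (by linarith) (by linarith)
      nlinarith
    simpa [w] using this
  have hx := rpos x ⟨le_rfl, hxy⟩
  have hy := rpos y ⟨hxy, le_rfl⟩
  let u : ℝ → ℝ := fun t => (F t - F x) / r t - r x * (t - x)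
  have hu : u x ≤ u y := by
    refine mono_help (g' := fun t => w t - r x) hxy (fun t ht => ?_) (fun t ht => by linarith [hw t ht])
    have h2 := rpos t ht
    have := (((d0 t).sub_const (F x)).div (dr t ht) h2.ne').sub
      (((hasDerivAt_id t).sub_const x).const_mul (r x))
    refine HasDerivAt.congr_deriv this ?_
    rw [rsq t ht]
    simp only [w]
    field_simp
  simp only [u, sub_self, zero_div, mul_zero] at hu
  rw [sub_nonneg, le_div_iff₀ hy] at hu
  have h3 : √(deriv F x) = r x := rfl
  have h4 : √(deriv F y) = r y := rfl
  rw [h3, h4]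
  linarith

/-- the cross-ratio -/
def Qx (a b c d : ℝ) : ℝ := (b - a) * (d - c) / ((c - a) * (d - b))

lemma Qx_negS {F : ℝ → ℝ} (hF : ContDiff ℝ 3 F) (hmono : StrictMono F) {a b c d : ℝ}
    (hab : a < b) (hbc : b < c) (hcd : c < d)
    (hpos : ∀ t ∈ Set.Icc a d, 0 < deriv F t)
    (hS : ∀ t ∈ Set.Icc a d, schwarzianDeriv F t < 0) :
    Qx (F a) (F b) (F c) (F d) ≤ Qx a b c d := by
  have d0 : ∀ t, HasDerivAt F (deriv F t) t := fun t =>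
    (hF.differentiable (by norm_num) t).hasDerivAt
  have hk : ∀ x ∈ Set.Icc a b, deriv F x / (F c - F x) - 1 / (c - x) ≤
      deriv F x / (F d - F x) - 1 / (d - x) := by
    intro x hx
    refine mono_help (g := fun y => deriv F x / (F y - F x) - 1 / (y - x))
      (g' := fun y => - (deriv F x * deriv F y) / (F y - F x)^2 + 1 / (y - x)^2) hcd.le ?_ ?_
    · intro y hy
      have hxy : x < y := by linarith [hx.2, hy.1]
      have h1 : F y - F x ≠ 0 := by have := hmono hxy; linarith
      have h2 : y - x ≠ 0 := by linarith
      have := ((hasDerivAt_const y (deriv F x)).div ((d0 y).sub_const (F x)) h1).sub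
        ((hasDerivAt_const y (1:ℝ)).div ((hasDerivAt_id y).sub_const x) h2)
      refine HasDerivAt.congr_deriv this ?_
      simp only [id]
      ring
    · intro y hy
      have hxy : x < y := by linarith [hx.2, hy.1]
      have h1 : 0 < F y - F x := by have := hmono hxy; linarith
      have h2 : 0 < y - x := by linarith
      have hsub : ∀ t ∈ Set.Icc x y, t ∈ Set.Icc a d := fun t ht =>
        ⟨hx.1.trans ht.1, ht.2.trans hy.2⟩
      have K := koebe hF hxy.le (fun t ht => hpos t (hsub t ht)) (fun t ht => hS t (hsub t ht))
      have px := hpos x (hsub x ⟨le_rfl, hxy.le⟩)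
      have py := hpos y (hsub y ⟨hxy.le, le_rfl⟩)
      have K2 : deriv F x * deriv F y * (y - x)^2 ≤ (F y - F x)^2 := by
        have := pow_le_pow_left₀ (by positivity) K 2
        rwa [mul_pow, mul_pow, Real.sq_sqrt px.le, Real.sq_sqrt py.le] at this
      rw [neg_div, neg_add_eq_sub, sub_nonneg, div_le_div_iff₀ (by positivity) (by positivity)]
      linarith
  have hg : -(Real.log (F d - F a) - Real.log (F c - F a) - Real.log (d - a) + Real.log (c - a)) ≤
      -(Real.log (F d - F b) - Real.log (F c - F b) - Real.log (d - b) + Real.log (c - b)) := by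
    refine mono_help (g := fun x => -(Real.log (F d - F x) - Real.log (F c - F x) - Real.log (d - x)
      + Real.log (c - x))) (g' := fun x => (deriv F x / (F d - F x) - 1 / (d - x)) -
        (deriv F x / (F c - F x) - 1 / (c - x))) hab.le ?_ ?_
    · intro x hx
      have hxc : x < c := by linarith [hx.2]
      have hxd : x < d := by linarith
      have h1 : F c - F x ≠ 0 := by have := hmono hxc; linarith
      have h2 : F d - F x ≠ 0 := by have := hmono hxd; linarith
      have h3 : c - x ≠ 0 := by linarith
      have h4 : d - x ≠ 0 := by linarith
      have := (((((d0 x).const_sub (F d)).log h2).sub (((d0 x).const_sub (F c)).log h1)).sub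
        (((hasDerivAt_id x).const_sub d).log h4)).add (((hasDerivAt_id x).const_sub c).log h3)
      refine HasDerivAt.congr_deriv this.neg ?_
      simp only [id]
      ring
    · intro x hx
      linarith [hk x hx]
  have e1 : 0 < F b - F a := by linarith [hmono hab]
  have e2 : 0 < F c - F b := by linarith [hmono hbc]
  have e3 : 0 < F d - F c := by linarith [hmono hcd]
  have hlog : Real.log ((F d - F b) * (F c - F a) * ((c - b) * (d - a))) ≤
      Real.log ((F d - F a) * (F c - F b) * ((d - b) * (c - a))) := by
    have n1 : F d - F b ≠ 0 := by linarith
    have n2 : F c - F a ≠ 0 := by linarith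
    have n3 : F d - F a ≠ 0 := by linarith
    have n4 : F c - F b ≠ 0 := by linarith
    have n5 : d - b ≠ 0 := by linarith
    have n6 : c - a ≠ 0 := by linarith
    have n7 : d - a ≠ 0 := by linarith
    have n8 : c - b ≠ 0 := by linarith
    rw [Real.log_mul (mul_ne_zero n1 n2) (mul_ne_zero n8 n7), Real.log_mul n1 n2, Real.log_mul n8 n7,
      Real.log_mul (mul_ne_zero n3 n4) (mul_ne_zero n5 n6), Real.log_mul n3 n4, Real.log_mul n5 n6]
    linarith
  have i1 : 0 < F d - F b := by linarith
  have i2 : 0 < F c - F a := by linarith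
  have i3 : 0 < F d - F a := by linarith
  have i5 : 0 < d - b := by linarith
  have i6 : 0 < c - a := by linarith
  have i7 : 0 < d - a := by linarith
  have i8 : 0 < c - b := by linarith
  rw [Real.log_le_log_iff (by positivity) (by positivity)] at hlog
  unfold Qx
  rw [div_le_div_iff₀ (by positivity) (by positivity)]
  linarith

lemma Qx_dist {F : ℝ → ℝ} (hF : Differentiable ℝ F) (hmono : StrictMono F) {a b c d K : ℝ}
    (hab : a < b) (hbc : b < c) (hcd : c < d)
    (hK : ∀ x y t, a ≤ x → x < y → y ≤ d → x ≤ t → t ≤ y → deriv F t * (y - x) ≤ K * (F y - F x)) :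
    Qx (F a) (F b) (F c) (F d) ≤ K ^ 2 * Qx a b c d := by
  have mvt : ∀ x y, x < y → ∃ t, x ≤ t ∧ t ≤ y ∧ F y - F x = deriv F t * (y - x) := by
    intro x y hxy
    obtain ⟨t, ht, h⟩ := exists_deriv_eq_slope F hxy hF.continuous.continuousOn
      hF.differentiableOn
    refine ⟨t, ht.1.le, ht.2.le, ?_⟩
    rw [h]; field_simp [sub_ne_zero.2 hxy.ne']
  have e1 : 0 < F b - F a := by linarith [hmono hab]
  have e2 : 0 < F c - F b := by linarith [hmono hbc]
  have e3 : 0 < F d - F c := by linarith [hmono hcd]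
  have i1 : 0 < F d - F b := by linarith
  have i2 : 0 < F c - F a := by linarith
  have i5 : 0 < d - b := by linarith
  have i6 : 0 < c - a := by linarith
  obtain ⟨t, t1, t2, ht⟩ := mvt a b hab
  obtain ⟨s, s1, s2, hs⟩ := mvt c d hcd
  have A := hK a c t le_rfl (by linarith) hcd.le t1 (by linarith)
  have B := hK b d s hab.le (by linarith) le_rfl (by linarith) s2
  have A' : (F b - F a) / (F c - F a) ≤ K * ((b - a) / (c - a)) := by
    rw [← mul_div_assoc, div_le_div_iff₀ i2 i6, ht]
    nlinarith
  have B' : (F d - F c) / (F d - F b) ≤ K * ((d - c) / (d - b)) := by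
    rw [← mul_div_assoc, div_le_div_iff₀ i1 i5, hs]
    nlinarith
  have := mul_le_mul A' B' (by positivity) (le_trans (by positivity) A')
  unfold Qx
  calc _ = (F b - F a) / (F c - F a) * ((F d - F c) / (F d - F b)) := by
        rw [div_mul_div_comm]
    _ ≤ _ := this
    _ = _ := by rw [mul_mul_mul_comm, div_mul_div_comm]; ring
lemma per_int {g : ℝ → ℝ} (h : ∀ x, g (x + 1) = g x) (x : ℝ) (k : ℤ) : g (x + k) = g x := by
  have : Function.Periodic g 1 := h
  simpa using this.int_mul k x

lemma per_bdd {g : ℝ → ℝ} (hg : Continuous g) (h : ∀ x, g (x + 1) = g x) :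
    (∃ x, ∀ y, g y ≤ g x) ∧ (∃ x, ∀ y, g x ≤ g y) := by
  have key : ∀ y, ∃ y' ∈ Set.Icc (0:ℝ) 1, g y = g y' := by
    intro y
    refine ⟨Int.fract y, ⟨Int.fract_nonneg y, (Int.fract_lt_one y).le⟩, ?_⟩
    conv_lhs => rw [← Int.fract_add_floor y]
    exact per_int h _ _
  constructor
  · obtain ⟨x, _, hx⟩ := isCompact_Icc.exists_isMaxOn (Set.nonempty_Icc.2 (zero_le_one (α := ℝ)))
      hg.continuousOn
    refine ⟨x, fun y => ?_⟩
    obtain ⟨y', hy', e⟩ := key y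
    rw [e]; exact hx hy'
  · obtain ⟨x, _, hx⟩ := isCompact_Icc.exists_isMinOn (Set.nonempty_Icc.2 (zero_le_one (α := ℝ)))
      hg.continuousOn
    refine ⟨x, fun y => ?_⟩
    obtain ⟨y', hy', e⟩ := key y
    rw [e]; exact hx hy'

namespace MCM

lemma diff (f : MCM) : Differentiable ℝ f.F := f.smooth.differentiable (by norm_num)

lemma smooth1 (f : MCM) : ContDiff ℝ 2 (deriv f.F) := by
  have : ContDiff ℝ (2+1) f.F := by convert f.smooth using 1; norm_num
  exact (contDiff_succ_iff_deriv.1 this).2.2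

lemma smooth2 (f : MCM) : ContDiff ℝ 1 (deriv (deriv f.F)) := by
  have : ContDiff ℝ (1+1) (deriv f.F) := by convert f.smooth1 using 1; norm_num
  exact (contDiff_succ_iff_deriv.1 this).2.2

lemma deriv_per (f : MCM) (x : ℝ) : deriv f.F (x + 1) = deriv f.F x := by
  rw [← deriv_comp_add_const]
  have : (fun x => f.F (x + 1)) = fun x => f.F x + 1 := funext f.deg1
  rw [this, deriv_add_const]

lemma deriv2_per (f : MCM) (x : ℝ) : deriv (deriv f.F) (x + 1) = deriv (deriv f.F) x := by
  rw [← deriv_comp_add_const]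
  have : (fun x => deriv f.F (x + 1)) = fun x => deriv f.F x := funext f.deriv_per
  rw [this]

lemma deriv_nonneg (f : MCM) (x : ℝ) : 0 ≤ deriv f.F x := f.mono.monotone.deriv_nonneg

lemma dichotomy (f : MCM) : ∃ δ > 0, ∃ m > 0, ∀ a d : ℝ, d - a < δ →
    (∃ (j : Fin f.N) (k : ℤ), ∀ t ∈ Set.Icc a d, t + k ∈ f.W j) ∨
    (∀ t ∈ Set.Icc a d, m ≤ deriv f.F t) := by
  obtain ⟨ε, hε, hW⟩ : ∃ ε > 0, ∀ j, Metric.ball (f.c j) ε ⊆ f.W j := by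
    have h1 : ∀ j, ∀ᶠ ε in nhdsWithin (0:ℝ) (Set.Ioi 0), Metric.ball (f.c j) ε ⊆ f.W j := by
      intro j
      obtain ⟨e, he, hb⟩ := Metric.isOpen_iff.1 (f.W_open j) _ (f.c_mem_W j)
      filter_upwards [Ioo_mem_nhdsGT he] with x hx
      exact (Metric.ball_subset_ball hx.2.le).trans hb
    obtain ⟨ε, h2, h3⟩ := ((eventually_all.2 h1).and self_mem_nhdsWithin).exists
    exact ⟨ε, h3, h2⟩
  obtain ⟨m, hm, hE⟩ : ∃ m > 0, ∀ t : ℝ, (∀ (j : Fin f.N) (k : ℤ), ε / 2 ≤ |t - f.c j - k|) →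
      m ≤ deriv f.F t := by
    let E : Set ℝ := Set.Icc 0 1 ∩ ⋂ (j : Fin f.N), ⋂ (k : ℤ), {t | ε / 2 ≤ |t - f.c j - k|}
    have hEc : IsCompact E := by
      refine isCompact_Icc.inter_right (isClosed_iInter fun j => isClosed_iInter fun k => ?_)
      exact isClosed_le continuous_const (by fun_prop)
    have hred : ∀ t : ℝ, (∀ (j : Fin f.N) (k : ℤ), ε / 2 ≤ |t - f.c j - k|) → Int.fract t ∈ E := by
      intro t ht
      refine ⟨⟨Int.fract_nonneg t, (Int.fract_lt_one t).le⟩, ?_⟩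
      simp only [Set.mem_iInter, Set.mem_ofPred_eq]
      intro j k
      have := ht j (k + ⌊t⌋)
      rw [← Int.self_sub_floor]
      push_cast at this
      convert this using 2
      ring
    have hval : ∀ t, deriv f.F t = deriv f.F (Int.fract t) := by
      intro t
      conv_lhs => rw [← Int.fract_add_floor t]
      exact per_int f.deriv_per _ _
    rcases E.eq_empty_or_nonempty with he | hne
    · refine ⟨1, one_pos, fun t ht => ?_⟩
      have := hred t ht
      rw [he] at this
      exact absurd this (Set.notMem_empty _)
    · obtain ⟨x, hx, hmin⟩ := hEc.exists_isMinOn hne f.smooth1.continuous.continuousOn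
      refine ⟨deriv f.F x, ?_, fun t ht => ?_⟩
      · refine lt_of_le_of_ne (f.deriv_nonneg x) (fun h0 => ?_)
        obtain ⟨j, k, hjk⟩ := f.critOnly x h0.symm
        have := hx.2
        simp only [Set.mem_iInter, Set.mem_ofPred_eq] at this
        have := this j k
        rw [hjk] at this
        simp at this
        linarith
      · rw [hval t]; exact hmin (hred t ht)
  refine ⟨ε / 2, by positivity, m, hm, fun a d had => ?_⟩
  by_cases h : ∃ t ∈ Set.Icc a d, ∃ (j : Fin f.N) (k : ℤ), |t - f.c j - k| < ε / 2
  · left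
    obtain ⟨t, ht, j, k, hjk⟩ := h
    refine ⟨j, -k, fun s hs => hW j ?_⟩
    rw [Metric.mem_ball, Real.dist_eq]
    push_cast
    rw [abs_lt] at hjk ⊢
    constructor <;> linarith [ht.1, ht.2, hs.1, hs.2, hjk.1, hjk.2]
  · right
    push Not at h
    exact fun t ht => hE t (h t ht)

lemma mvt_lower (f : MCM) {x y m : ℝ} (hxy : x ≤ y) (h : ∀ t ∈ Set.Icc x y, m ≤ deriv f.F t) :
    m * (y - x) ≤ f.F y - f.F x := by
  have := mono_help (g := fun t => f.F t - m * t) (g' := fun t => deriv f.F t - m * 1) hxy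
    (fun t _ => (f.diff t).hasDerivAt.sub ((hasDerivAt_id t).const_mul m))
    (fun t ht => by linarith [h t ht])
  linarith

lemma power_dist (f : MCM) (j : Fin f.N) : ∃ K : ℝ, 0 ≤ K ∧ ∀ x y t : ℝ, x < y → x ≤ t → t ≤ y →
    (∀ u ∈ Set.Icc x y, u ∈ f.W j) → deriv f.F t * (y - x) ≤ K * (f.F y - f.F x) := by
  have hal := f.al_pos j
  have hbe : 0 < f.be j := hal.trans (f.al_lt_be j)
  have hs : 0 < f.s j - 1 := by linarith [f.s_gt_one j]
  refine ⟨4 * f.be j * 2 ^ (f.s j - 1) / f.al j, by positivity, ?_⟩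
  intro x y t hxy hxt hty hW
  have main : ∀ ℓ x' y' : ℝ, 0 < ℓ → x ≤ x' → y' ≤ y → y' - x' = (y - x) / 4 →
      |t - f.c j| ≤ ℓ → (∀ u ∈ Set.Icc x' y', ℓ / 2 ≤ |u - f.c j|) →
      deriv f.F t * (y - x) ≤ 4 * f.be j * 2 ^ (f.s j - 1) / f.al j * (f.F y - f.F x) := by
    intro ℓ x' y' hℓ hx' hy' hlen htl hu
    have h1 : deriv f.F t ≤ f.be j * ℓ ^ (f.s j - 1) := by
      by_cases htc : t = f.c j
      · rw [htc, f.isCrit]; positivity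
      · refine (f.powerLaw j t (hW t ⟨hxt, hty⟩) htc).2.le.trans ?_
        gcongr
    have h2 := f.mvt_lower (x := x') (y := y') (m := f.al j * (ℓ / 2) ^ (f.s j - 1)) (by linarith) (by
      intro u hu'
      have hl := hu u hu'
      have huc : u ≠ f.c j := by
        rintro rfl
        simp at hl; linarith
      refine le_trans ?_ (f.powerLaw j u (hW u ⟨by linarith [hu'.1], by linarith [hu'.2]⟩) huc).1.le
      gcongr)
    have h3 : f.F x ≤ f.F x' := f.mono.monotone hx'
    have h4 : f.F y' ≤ f.F y := f.mono.monotone hy'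
    rw [hlen, Real.div_rpow hℓ.le (by norm_num)] at h2
    have h5 : 0 < (2:ℝ) ^ (f.s j - 1) := by positivity
    calc deriv f.F t * (y - x) ≤ f.be j * ℓ ^ (f.s j - 1) * (y - x) := by
          gcongr
      _ = 4 * f.be j * 2 ^ (f.s j - 1) / f.al j *
          (f.al j * (ℓ ^ (f.s j - 1) / 2 ^ (f.s j - 1)) * ((y - x) / 4)) := by
          field_simp
      _ ≤ _ := by
          gcongr
          linarith
  rcases le_total (f.c j - x) (y - f.c j) with h | h
  · refine main (y - f.c j) (y - (y - x) / 4) y (by linarith) (by linarith) le_rfl (by ring) ?_ ?_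
    · rw [abs_le]; constructor <;> linarith
    · intro u hu
      rw [le_abs]; left; linarith [hu.1]
  · refine main (f.c j - x) x (x + (y - x) / 4) (by linarith) le_rfl (by linarith) (by ring) ?_ ?_
    · rw [abs_le]; constructor <;> linarith
    · intro u hu
      rw [le_abs]; right; linarith [hu.2]

lemma star (f : MCM) : ∃ K : ℝ, 1 ≤ K ∧ ∀ x y t : ℝ, x < y → y - x ≤ 3 → x ≤ t → t ≤ y →
    deriv f.F t * (y - x) ≤ K * (f.F y - f.F x) := by
  obtain ⟨δ, hδ, m, hm, hdich⟩ := f.dichotomy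
  choose Kf hKf0 hKf using f.power_dist
  obtain ⟨⟨x1, hx1⟩, -⟩ := per_bdd f.smooth1.continuous f.deriv_per
  obtain ⟨-, ⟨x2, hx2⟩⟩ := per_bdd (g := fun x => f.F (x + δ) - f.F x)
    (by have := f.diff.continuous; fun_prop)
    (by intro x; rw [f.deg1, show x + 1 + δ = (x + δ) + 1 by ring, f.deg1]; ring)
  obtain ⟨M, hM⟩ : ∃ M, M = deriv f.F x1 := ⟨_, rfl⟩
  obtain ⟨η, hη⟩ : ∃ η, η = f.F (x2 + δ) - f.F x2 := ⟨_, rfl⟩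
  rw [← hM] at hx1
  rw [← hη] at hx2
  have hM0 : 0 ≤ M := hM ▸ f.deriv_nonneg _
  have hη0 : 0 < η := by
    have := f.mono (show x2 < x2 + δ by linarith)
    linarith
  have hsum : 0 ≤ ∑ j, Kf j := Finset.sum_nonneg (fun j _ => hKf0 j)
  have q1 : 0 ≤ 3 * M / η := by positivity
  have q2 : 0 ≤ M / m := by positivity
  refine ⟨1 + 3 * M / η + M / m + ∑ j, Kf j, by linarith, ?_⟩
  intro x y t hxy h3 hxt hty
  have hF : 0 < f.F y - f.F x := by linarith [f.mono hxy]
  have hup : ∀ K', K' ≤ 1 + 3 * M / η + M / m + ∑ j, Kf j →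
      deriv f.F t * (y - x) ≤ K' * (f.F y - f.F x) →
      deriv f.F t * (y - x) ≤ (1 + 3 * M / η + M / m + ∑ j, Kf j) * (f.F y - f.F x) := by
    intro K' h1 h2
    exact h2.trans (by gcongr)
  by_cases hbig : δ ≤ y - x
  · refine hup (3 * M / η) (by linarith) ?_
    have a1 : η ≤ f.F y - f.F x := by
      have := f.mono.monotone (show x + δ ≤ y by linarith)
      linarith [hx2 x]
    calc deriv f.F t * (y - x) ≤ M * 3 := by
          have := hx1 t
          gcongr
      _ = 3 * M / η * η := by field_simp
      _ ≤ _ := by gcongr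
  · rcases hdich x y (by linarith) with ⟨j, k, hjk⟩ | hmm
    · refine hup (Kf j) ?_ ?_
      · have := Finset.single_le_sum (f := Kf) (fun j _ => hKf0 j) (Finset.mem_univ j)
        linarith
      · have := hKf j (x + k) (y + k) (t + k) (by linarith) (by linarith) (by linarith) (by
          intro u hu
          have := hjk (u - k) ⟨by linarith [hu.1], by linarith [hu.2]⟩
          simpa using this)
        rw [f.add_int, f.add_int, per_int f.deriv_per] at this
        convert this using 2 <;> ring
    · refine hup (M / m) (by linarith) ?_
      have := f.mvt_lower hxy.le hmm
      calc deriv f.F t * (y - x) ≤ M * (y - x) := by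
            have := hx1 t
            gcongr
        _ = M / m * (m * (y - x)) := by field_simp
        _ ≤ _ := by gcongr

lemma Qx_add (a b c d k : ℝ) : Qx (a + k) (b + k) (c + k) (d + k) = Qx a b c d := by
  unfold Qx; congr 1 <;> ring

lemma Qx_pos {a b c d : ℝ} (hab : a < b) (hbc : b < c) (hcd : c < d) : 0 < Qx a b c d := by
  unfold Qx
  exact div_pos (mul_pos (by linarith) (by linarith)) (mul_pos (by linarith) (by linarith))

open Classical in
/-- the indicator of containing a critical point -/
def ind (f : MCM) (κ a d : ℝ) : ℝ :=
  if ∃ (j : Fin f.N) (k : ℤ), f.c j + k ∈ Set.Icc a d then κ else 0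

lemma step (f : MCM) : ∃ A κ : ℝ, 0 ≤ A ∧ 0 ≤ κ ∧ ∀ a b c d : ℝ, a < b → b < c → c < d → d - a ≤ 3 →
    Qx (f.F a) (f.F b) (f.F c) (f.F d) ≤ Real.exp (A * (d - a) + f.ind κ a d) * Qx a b c d := by
  obtain ⟨δ, hδ, m, hm, hdich⟩ := f.dichotomy
  obtain ⟨K, hK1, hK⟩ := f.star
  obtain ⟨⟨x1, hx1⟩, -⟩ := per_bdd (g := fun x => |deriv (deriv f.F) x|)
    (by have := f.smooth2.continuous; fun_prop) (by intro x; rw [f.deriv2_per])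
  obtain ⟨M, hM⟩ : ∃ M, M = |deriv (deriv f.F) x1| := ⟨_, rfl⟩
  rw [← hM] at hx1
  have hM0 : 0 ≤ M := hM ▸ abs_nonneg _
  have hκ : 0 ≤ 2 * Real.log K := mul_nonneg (by norm_num) (Real.log_nonneg hK1)
  have e1 : 0 ≤ M / m := by positivity
  have e2 : 0 ≤ 2 * Real.log K / δ := by positivity
  refine ⟨2 * (M / m) + 2 * Real.log K / δ, 2 * Real.log K, by linarith, hκ, ?_⟩
  intro a b c d hab hbc hcd h3
  have had : 0 < d - a := by linarith
  have hQ := Qx_pos hab hbc hcd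
  have hind : 0 ≤ f.ind (2 * Real.log K) a d := by
    unfold ind; split_ifs <;> linarith
  have hup : ∀ β K', Real.exp β = K' →
      β ≤ (2 * (M / m) + 2 * Real.log K / δ) * (d - a) + f.ind (2 * Real.log K) a d →
      Qx (f.F a) (f.F b) (f.F c) (f.F d) ≤ K' * Qx a b c d →
      Qx (f.F a) (f.F b) (f.F c) (f.F d) ≤
      Real.exp ((2 * (M / m) + 2 * Real.log K / δ) * (d - a) + f.ind (2 * Real.log K) a d) *
        Qx a b c d := by
    intro β K' h1 h2 h4
    refine h4.trans ?_
    rw [← h1]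
    gcongr
  have hA : 0 ≤ (2 * (M / m) + 2 * Real.log K / δ) * (d - a) := mul_nonneg (by linarith) had.le
  have hKexp : Real.exp (2 * Real.log K) = K ^ 2 := by
    rw [two_mul, Real.exp_add, Real.exp_log (by linarith), sq]
  have hKQ : Qx (f.F a) (f.F b) (f.F c) (f.F d) ≤ K ^ 2 * Qx a b c d :=
    Qx_dist f.diff f.mono hab hbc hcd (fun x y t h1 h2 h4 h5 h6 =>
      hK x y t h2 (by linarith) h5 h6)
  by_cases hcrit : ∃ (j : Fin f.N) (k : ℤ), f.c j + k ∈ Set.Icc a d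
  · refine hup _ _ hKexp ?_ hKQ
    have : f.ind (2 * Real.log K) a d = 2 * Real.log K := by unfold ind; rw [if_pos hcrit]
    linarith
  by_cases hbig : δ ≤ d - a
  · refine hup _ _ hKexp ?_ hKQ
    have : 2 * Real.log K ≤ 2 * Real.log K / δ * (d - a) := by
      calc 2 * Real.log K = 2 * Real.log K / δ * δ := by field_simp
        _ ≤ _ := by gcongr
    have : 0 ≤ 2 * (M / m) * (d - a) := by positivity
    linarith
  rcases hdich a d (by linarith) with ⟨j, k, hjk⟩ | hmm
  · refine hup 0 1 Real.exp_zero (by linarith) ?_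
    rw [one_mul]
    have hne : ∀ t ∈ Set.Icc (a + k) (d + k), t ∈ f.W j ∧ t ≠ f.c j := by
      intro t ht
      have h' : t - k ∈ Set.Icc a d := ⟨by linarith [ht.1], by linarith [ht.2]⟩
      refine ⟨by simpa using hjk (t - k) h', ?_⟩
      rintro rfl
      refine hcrit ⟨j, -k, ?_⟩
      push_cast
      rwa [← sub_eq_add_neg]
    have := Qx_negS f.smooth f.mono (a := a + k) (b := b + k) (c := c + k) (d := d + k)
      (by linarith) (by linarith) (by linarith) (by
        intro t ht
        obtain ⟨h1, h2⟩ := hne t ht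
        refine lt_of_le_of_lt ?_ (f.powerLaw j t h1 h2).1
        have := f.al_pos j
        positivity)
      (fun t ht => f.negSchwarzian j t (hne t ht).1 (hne t ht).2)
    rwa [f.add_int, f.add_int, f.add_int, f.add_int, Qx_add, Qx_add] at this
  · refine hup (2 * (M / m) * (d - a)) (Real.exp (M / m * (d - a)) ^ 2) ?_ ?_ ?_
    · rw [← Real.exp_nat_mul]; congr 1; push_cast; ring
    · have : 0 ≤ 2 * Real.log K / δ * (d - a) := by positivity
      linarith
    · refine Qx_dist f.diff f.mono hab hbc hcd ?_
      intro x y t hax hxy hyd hxt hty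
      obtain ⟨u, hu, hslope⟩ := exists_deriv_eq_slope f.F hxy f.diff.continuous.continuousOn
        f.diff.differentiableOn
      have hFu : f.F y - f.F x = deriv f.F u * (y - x) := by
        rw [hslope]; field_simp [sub_ne_zero.2 hxy.ne']
      have ht : t ∈ Set.Icc a d := ⟨by linarith, by linarith⟩
      have hu' : u ∈ Set.Icc a d := ⟨by linarith [hu.1], by linarith [hu.2]⟩
      have pt : 0 < deriv f.F t := hm.trans_le (hmm t ht)
      have pu : 0 < deriv f.F u := hm.trans_le (hmm u hu')
      have hlip := Convex.norm_image_sub_le_of_norm_hasDerivWithin_le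
        (f := fun s => Real.log (deriv f.F s)) (f' := fun s => deriv (deriv f.F) s / deriv f.F s)
        (C := M / m) (s := Set.Icc a d) (x := u) (y := t)
        (fun s hs => (((f.smooth1.differentiable (by norm_num) s).hasDerivAt.log
          (hm.trans_le (hmm s hs)).ne')).hasDerivWithinAt)
        (fun s hs => by
          rw [Real.norm_eq_abs, abs_div, abs_of_pos (hm.trans_le (hmm s hs))]
          have := hx1 s
          have := hmm s hs
          gcongr) (convex_Icc a d) hu' ht
      simp only [Real.norm_eq_abs] at hlip
      have hdist : |t - u| ≤ d - a := by
        rw [abs_le]; constructor <;> linarith [ht.1, ht.2, hu'.1, hu'.2]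
      have hlog : Real.log (deriv f.F t) ≤ M / m * (d - a) + Real.log (deriv f.F u) := by
        have := le_abs_self (Real.log (deriv f.F t) - Real.log (deriv f.F u))
        have : M / m * |t - u| ≤ M / m * (d - a) := by gcongr
        linarith
      have hexp : deriv f.F t ≤ Real.exp (M / m * (d - a)) * deriv f.F u := by
        rw [Real.log_le_iff_le_exp pt, Real.exp_add, Real.exp_log pu] at hlog
        exact hlog
      rw [hFu, ← mul_assoc]
      have : 0 < y - x := by linarith
      gcongr

end MCM
namespace MCM

lemma chain (f : MCM) {A κ : ℝ}
    (hstep : ∀ a b c d : ℝ, a < b → b < c → c < d → d - a ≤ 3 →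
      Qx (f.F a) (f.F b) (f.F c) (f.F d) ≤ Real.exp (A * (d - a) + f.ind κ a d) * Qx a b c d)
    {a b c d : ℝ} (hab : a < b) (hbc : b < c) (hcd : c < d) (q : ℕ)
    (h3 : ∀ i < q, f.F^[i] d - f.F^[i] a ≤ 3) :
    Qx (f.F^[q] a) (f.F^[q] b) (f.F^[q] c) (f.F^[q] d) ≤
      Real.exp (∑ i ∈ Finset.range q,
        (A * (f.F^[i] d - f.F^[i] a) + f.ind κ (f.F^[i] a) (f.F^[i] d))) * Qx a b c d := by
  induction q with
  | zero => simp
  | succ q ih =>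
    have hmono := f.mono.iterate q
    rw [Finset.sum_range_succ, Real.exp_add, mul_comm (Real.exp _) (Real.exp _), mul_assoc]
    rw [Function.iterate_succ_apply', Function.iterate_succ_apply', Function.iterate_succ_apply',
      Function.iterate_succ_apply']
    refine (hstep _ _ _ _ (hmono hab) (hmono hbc) (hmono hcd) (h3 q (by omega))).trans ?_
    have := ih (fun i hi => h3 i (by omega))
    gcongr

open Classical in
lemma ind_sum (f : MCM) {κ : ℝ} (hκ : 0 ≤ κ) {a b c d : ℝ} (q : ℕ)
    (hab : NonOv q (fun i => f.F^[i] a) (fun i => f.F^[i] b))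
    (hbc : NonOv q (fun i => f.F^[i] b) (fun i => f.F^[i] c))
    (hcd : NonOv q (fun i => f.F^[i] c) (fun i => f.F^[i] d)) :
    ∑ i ∈ Finset.range q, f.ind κ (f.F^[i] a) (f.F^[i] d) ≤ 6 * f.N * κ := by
  unfold ind
  rw [← Finset.sum_filter, Finset.sum_const, nsmul_eq_mul]
  have hcard : ((Finset.range q).filter (fun i => ∃ (j : Fin f.N) (k : ℤ),
      f.c j + k ∈ Set.Icc (f.F^[i] a) (f.F^[i] d))).card ≤ f.N * 6 := by
    have hsub : (Finset.range q).filter (fun i => ∃ (j : Fin f.N) (k : ℤ),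
        f.c j + k ∈ Set.Icc (f.F^[i] a) (f.F^[i] d)) ⊆
        (Finset.univ : Finset (Fin f.N)).biUnion (fun j =>
          ((Finset.range q).filter (fun i => ∃ k : ℤ, f.c j + k ∈ Set.Icc (f.F^[i] a) (f.F^[i] b)) ∪
          (Finset.range q).filter (fun i => ∃ k : ℤ, f.c j + k ∈ Set.Icc (f.F^[i] b) (f.F^[i] c))) ∪
          (Finset.range q).filter (fun i => ∃ k : ℤ, f.c j + k ∈ Set.Icc (f.F^[i] c) (f.F^[i] d))) := by
      intro i hi
      simp only [Finset.mem_biUnion, Finset.mem_union, Finset.mem_filter, Finset.mem_univ,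
        true_and] at hi ⊢
      obtain ⟨hi, j, k, h1, h2⟩ := hi
      refine ⟨j, ?_⟩
      rcases le_total (f.c j + k) (f.F^[i] b) with h | h
      · exact Or.inl (Or.inl ⟨hi, k, h1, h⟩)
      · rcases le_total (f.c j + k) (f.F^[i] c) with h' | h'
        · exact Or.inl (Or.inr ⟨hi, k, h, h'⟩)
        · exact Or.inr ⟨hi, k, h', h2⟩
    refine (Finset.card_le_card hsub).trans ?_
    refine (Finset.card_biUnion_le_card_mul _ _ 6 (fun j _ => ?_)).trans (by simp)
    refine (Finset.card_union_le _ _).trans ?_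
    have e := Finset.card_union_le
      ((Finset.range q).filter (fun i => ∃ k : ℤ, f.c j + k ∈ Set.Icc (f.F^[i] a) (f.F^[i] b)))
      ((Finset.range q).filter (fun i => ∃ k : ℤ, f.c j + k ∈ Set.Icc (f.F^[i] b) (f.F^[i] c)))
    have e1 := hab.count_le (f.c j)
    have e2 := hbc.count_le (f.c j)
    have e3 := hcd.count_le (f.c j)
    omega
  have : (((Finset.range q).filter (fun i => ∃ (j : Fin f.N) (k : ℤ),
      f.c j + k ∈ Set.Icc (f.F^[i] a) (f.F^[i] d))).card : ℝ) ≤ 6 * f.N := by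
    have : (((Finset.range q).filter (fun i => ∃ (j : Fin f.N) (k : ℤ),
      f.c j + k ∈ Set.Icc (f.F^[i] a) (f.F^[i] d))).card : ℝ) ≤ ((f.N * 6 : ℕ) : ℝ) := by
      exact_mod_cast hcard
    push_cast at this
    linarith
  gcongr

lemma crossratio (f : MCM) : ∃ B : ℝ, 1 ≤ B ∧ ∀ (q : ℕ) (a b c d : ℝ), a < b → b < c → c < d →
    NonOv q (fun i => f.F^[i] a) (fun i => f.F^[i] b) →
    NonOv q (fun i => f.F^[i] b) (fun i => f.F^[i] c) →
    NonOv q (fun i => f.F^[i] c) (fun i => f.F^[i] d) →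
    Qx (f.F^[q] a) (f.F^[q] b) (f.F^[q] c) (f.F^[q] d) ≤ B * Qx a b c d := by
  obtain ⟨A, κ, hA, hκ, hstep⟩ := f.step
  refine ⟨Real.exp (A * 3 + 6 * f.N * κ), Real.one_le_exp (by positivity), ?_⟩
  intro q a b c d hab hbc hcd n1 n2 n3
  have s1 := n1.sum_le
  have s2 := n2.sum_le
  have s3 := n3.sum_le
  have hsum : ∑ i ∈ Finset.range q, (f.F^[i] d - f.F^[i] a) ≤ 3 := by
    have : ∑ i ∈ Finset.range q, (f.F^[i] d - f.F^[i] a) =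
        ∑ i ∈ Finset.range q, (f.F^[i] b - f.F^[i] a) + ∑ i ∈ Finset.range q, (f.F^[i] c - f.F^[i] b)
        + ∑ i ∈ Finset.range q, (f.F^[i] d - f.F^[i] c) := by
      rw [← Finset.sum_add_distrib, ← Finset.sum_add_distrib]
      refine Finset.sum_congr rfl (fun i _ => by ring)
    linarith
  have hnn : ∀ i ∈ Finset.range q, 0 ≤ f.F^[i] d - f.F^[i] a := by
    intro i _
    have := f.mono.iterate i (show a < d by linarith)
    linarith
  have h3 : ∀ i < q, f.F^[i] d - f.F^[i] a ≤ 3 := fun i hi =>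
    (Finset.single_le_sum hnn (Finset.mem_range.2 hi)).trans hsum
  refine (f.chain hstep hab hbc hcd q h3).trans ?_
  have hQ := Qx_pos hab hbc hcd
  have hi := f.ind_sum hκ q n1 n2 n3
  have : ∑ i ∈ Finset.range q,
        (A * (f.F^[i] d - f.F^[i] a) + f.ind κ (f.F^[i] a) (f.F^[i] d)) ≤ A * 3 + 6 * f.N * κ := by
    rw [Finset.sum_add_distrib, ← Finset.mul_sum]
    gcongr
  gcongr

lemma Qx_rev (a b c d : ℝ) : Qx d c b a = Qx a b c d := by
  unfold Qx; congr 1 <;> ring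

lemma gaps (f : MCM) {ρ : ℝ} (hirr : Irrational ρ) (hrot : HasRotationNumber f.F ρ) {B : ℝ}
    (hB : ∀ (q : ℕ) (a b c d : ℝ), a < b → b < c → c < d →
    NonOv q (fun i => f.F^[i] a) (fun i => f.F^[i] b) →
    NonOv q (fun i => f.F^[i] b) (fun i => f.F^[i] c) →
    NonOv q (fun i => f.F^[i] c) (fun i => f.F^[i] d) →
    Qx (f.F^[q] a) (f.F^[q] b) (f.F^[q] c) (f.F^[q] d) ≤ B * Qx a b c d)
    (q : ℕ) (p : ℤ) (hth : (q:ℝ) * ρ - p ≠ 0)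
    (hbest : ∀ (m : ℕ) (k : ℤ), m < q → (m ≠ 0 ∨ k ≠ 0) → |(q:ℝ) * ρ - p| ≤ |m * ρ - k|)
    (x0 x1 x2 x3 x4 : ℝ) (h1 : x1 = f.F^[q] x0 - p) (h2 : x2 = f.F^[q] x1 - p)
    (h3 : x3 = f.F^[q] x2 - p) (h4 : x4 = f.F^[q] x3 - p) :
    |x2 - x1| * |x4 - x3| * (|x1 - x0| + |x2 - x1|) ≤
      B * (|x1 - x0| * |x3 - x2|) * (|x3 - x2| + |x4 - x3|) := by
  have hQ : Qx x1 x2 x3 x4 ≤ B * Qx x0 x1 x2 x3 := by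
    have e : Qx x1 x2 x3 x4 = Qx (f.F^[q] x0) (f.F^[q] x1) (f.F^[q] x2) (f.F^[q] x3) := by
      rw [← Qx_add x1 x2 x3 x4 p, h4, h3, h2, h1]
      simp
    rw [e]
    have n0 := f.nonOv hirr hrot q p hth hbest x0
    have n1 := f.nonOv hirr hrot q p hth hbest x1
    have n2 := f.nonOv hirr hrot q p hth hbest x2
    rw [← h1] at n0
    rw [← h2] at n1
    rw [← h3] at n2
    obtain ⟨S1, S2⟩ := f.lt_of hrot q p
    rcases lt_or_gt_of_ne hth with hneg | hpos
    · have S := S1 (by linarith)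
      have l0 : x1 < x0 := by linarith [S x0]
      have l1 : x2 < x1 := by linarith [S x1]
      have l2 : x3 < x2 := by linarith [S x2]
      rw [min_eq_right l0.le, max_eq_left l0.le] at n0
      rw [min_eq_right l1.le, max_eq_left l1.le] at n1
      rw [min_eq_right l2.le, max_eq_left l2.le] at n2
      have := hB q x3 x2 x1 x0 l2 l1 l0 n2 n1 n0
      rwa [Qx_rev (f.F^[q] x0), Qx_rev x0] at this
    · have S := S2 (by linarith)
      have l0 : x0 < x1 := by linarith [S x0]
      have l1 : x1 < x2 := by linarith [S x1]
      have l2 : x2 < x3 := by linarith [S x2]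
      rw [min_eq_left l0.le, max_eq_right l0.le] at n0
      rw [min_eq_left l1.le, max_eq_right l1.le] at n1
      rw [min_eq_left l2.le, max_eq_right l2.le] at n2
      exact hB q x0 x1 x2 x3 l0 l1 l2 n0 n1 n2
  have main : ∀ g0 g1 g2 g3 : ℝ, 0 < g0 → 0 < g1 → 0 < g2 → 0 < g3 →
      g1 * g3 / ((g1 + g2) * (g2 + g3)) ≤ B * (g0 * g2 / ((g0 + g1) * (g1 + g2))) →
      g1 * g3 * (g0 + g1) ≤ B * (g0 * g2) * (g2 + g3) := by
    intro g0 g1 g2 g3 p0 p1 p2 p3 h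
    rw [← mul_div_assoc, div_le_div_iff₀ (by positivity) (by positivity)] at h
    have : 0 < g1 + g2 := by positivity
    refine le_of_mul_le_mul_right ?_ this
    linarith
  obtain ⟨S1, S2⟩ := f.lt_of hrot q p
  rcases lt_or_gt_of_ne hth with hneg | hpos
  · have S := S1 (by linarith)
    have l0 : x1 < x0 := by linarith [S x0]
    have l1 : x2 < x1 := by linarith [S x1]
    have l2 : x3 < x2 := by linarith [S x2]
    have l3 : x4 < x3 := by linarith [S x3]
    rw [abs_of_neg (sub_neg.2 l0), abs_of_neg (sub_neg.2 l1), abs_of_neg (sub_neg.2 l2),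
      abs_of_neg (sub_neg.2 l3)]
    refine main _ _ _ _ (by linarith) (by linarith) (by linarith) (by linarith) ?_
    unfold Qx at hQ
    convert hQ using 2
    · ring
    · ring
    · congr 1 <;> ring
  · have S := S2 (by linarith)
    have l0 : x0 < x1 := by linarith [S x0]
    have l1 : x1 < x2 := by linarith [S x1]
    have l2 : x2 < x3 := by linarith [S x2]
    have l3 : x3 < x4 := by linarith [S x3]
    rw [abs_of_pos (sub_pos.2 l0), abs_of_pos (sub_pos.2 l1), abs_of_pos (sub_pos.2 l2),
      abs_of_pos (sub_pos.2 l3)]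
    refine main _ _ _ _ (by linarith) (by linarith) (by linarith) (by linarith) ?_
    unfold Qx at hQ
    convert hQ using 2
    · ring
    · congr 1; ring

lemma iter_surj (f : MCM) (q : ℕ) : Function.Surjective (f.F^[q]) := by
  let g : CircleDeg1Lift := ⟨⟨f.F, f.mono.monotone⟩, f.deg1⟩
  have h : Function.Surjective f.F :=
    f.diff.continuous.surjective g.tendsto_atTop g.tendsto_atBot
  exact h.iterate q

end MCM

lemma gap_arith {B d0 d1 d2 d3 d4 d5 : ℝ} (hB : 1 ≤ B) (p0 : 0 < d0) (p1 : 0 < d1) (p2 : 0 < d2)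
    (p3 : 0 < d3) (p4 : 0 < d4) (p5 : 0 < d5) (m2 : d4 ≤ d3) (m5 : d4 ≤ d5)
    (h0 : d1 * d3 * (d0 + d1) ≤ B * (d0 * d2) * (d2 + d3))
    (h1 : d2 * d4 * (d1 + d2) ≤ B * (d1 * d3) * (d3 + d4))
    (h2 : d3 * d5 * (d2 + d3) ≤ B * (d2 * d4) * (d4 + d5)) :
    d3 ≤ 2 * B * d4 ∧ d2 ≤ B * (2 * B) * (2 * B + 1) * d4 ∧
    d1 ≤ B * (B * (2 * B) * (2 * B + 1)) * (B * (2 * B) * (2 * B + 1) + 1) * d4 := by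
  have r3 : d3 ≤ 2 * B * d4 := by
    have : 0 < d2 * d5 := by positivity
    refine le_of_mul_le_mul_left ?_ this
    calc d2 * d5 * d3 ≤ d3 * d5 * (d2 + d3) := by nlinarith [mul_pos (mul_pos p3 p5) p3]
      _ ≤ _ := h2
      _ ≤ B * (d2 * d4) * (d5 + d5) := by gcongr
      _ = _ := by ring
  have r2 : d2 ≤ B * (2 * B) * (2 * B + 1) * d4 := by
    have : 0 < d1 * d4 := by positivity
    refine le_of_mul_le_mul_left ?_ this
    calc d1 * d4 * d2 ≤ d2 * d4 * (d1 + d2) := by nlinarith [mul_pos (mul_pos p2 p4) p2]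
      _ ≤ _ := h1
      _ ≤ B * (d1 * (2 * B * d4)) * (2 * B * d4 + d4) := by gcongr
      _ = _ := by ring
  refine ⟨r3, r2, ?_⟩
  obtain ⟨E, hE⟩ : ∃ E, E = B * (2 * B) * (2 * B + 1) := ⟨_, rfl⟩
  rw [← hE] at r2 ⊢
  have hE0 : 0 < E := by rw [hE]; positivity
  have : 0 < d0 * d3 := by positivity
  refine le_of_mul_le_mul_left ?_ this
  calc d0 * d3 * d1 ≤ d1 * d3 * (d0 + d1) := by nlinarith [mul_pos (mul_pos p1 p3) p1]
    _ ≤ _ := h0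
    _ ≤ B * (d0 * (E * d4)) * (E * d3 + d3) := by
      have : d2 ≤ E * d3 := r2.trans (by gcongr)
      gcongr
    _ = _ := by ring

/-- **seven-point lemma.** There is `C₁ > 1` depending only on `f` such that
for each `n` there are points `z₁, …, z₅` with `z_{j+1} = f^{q_n}(z_j)` (written on lifts:
`z (j+1) = F^[q_n] (z j) - p_n`) whose three middle consecutive gaps are pairwise
comparable. -/
theorem seven_point_lemma
    (f : MCM) (ρ : ℝ) (hirr : Irrational ρ) (hmem : ρ ∈ Set.Ioo (0 : ℝ) 1)
    (hrot : HasRotationNumber f.F ρ) :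
    ∃ C₁ : ℝ, 1 < C₁ ∧ ∀ n : ℕ, ∃ z : ℕ → ℝ,
      (∀ j : ℕ, 1 ≤ j → j ≤ 4 → z (j + 1) = f.F^[qDen ρ n] (z j) - (pNum ρ n : ℝ)) ∧
      ∀ i : ℕ, 2 ≤ i → i ≤ 4 →
        C₁⁻¹ ≤ |z (i - 1) - z i| / |z (i + 1) - z i| ∧
          |z (i - 1) - z i| / |z (i + 1) - z i| ≤ C₁ := by
  obtain ⟨B, hB1, hB⟩ := f.crossratio
  obtain ⟨E, hE⟩ : ∃ E, E = B * (2 * B) * (2 * B + 1) := ⟨_, rfl⟩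
  have hE2 : 2 * B ≤ E := by
    have : 1 ≤ B * B := by nlinarith
    rw [hE]; nlinarith
  have hE1 : 2 ≤ E := by linarith
  have hCE : E ≤ B * E * (E + 1) := by
    have : E ≤ B * E := by nlinarith
    nlinarith
  refine ⟨B * E * (E + 1), by linarith, fun n => ?_⟩
  have hth : ((qDen ρ n : ℕ) : ℝ) * ρ - ((pNum ρ n : ℤ) : ℝ) ≠ 0 := by
    have := (thet_sign hirr hmem n).1
    simpa [thet] using this
  have hbest : ∀ (m : ℕ) (k : ℤ), m < qDen ρ n → (m ≠ 0 ∨ k ≠ 0) →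
      |((qDen ρ n : ℕ) : ℝ) * ρ - ((pNum ρ n : ℤ) : ℝ)| ≤ |m * ρ - k| := by
    intro m k hm hk
    have := best_approx hirr hmem n m k hm hk
    simpa [thet] using this
  obtain ⟨p, hp⟩ : ∃ p : ℤ, p = (pNum ρ n : ℤ) := ⟨_, rfl⟩
  have hpc : ((pNum ρ n : ℕ) : ℝ) = (p : ℝ) := by rw [hp]; simp
  rw [← hp] at hth hbest
  rw [hpc]
  generalize qDen ρ n = q at *
  have hcont : Continuous f.F^[q] := f.diff.continuous.iterate q
  have hper : ∀ x, f.F^[q] (x + 1) = f.F^[q] x + 1 := by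
    intro x; simpa using f.iter_add_int q x 1
  obtain ⟨-, y, hy⟩ := per_bdd (g := fun x => |f.F^[q] x - p - x|) (by fun_prop)
    (by intro x; rw [hper]; congr 1; ring)
  have hsurj : ∀ u, ∃ x, u = f.F^[q] x - p := by
    intro u
    obtain ⟨x, hx⟩ := f.iter_surj q (u + p)
    exact ⟨x, by rw [hx]; ring⟩
  obtain ⟨y3, h3⟩ := hsurj y
  obtain ⟨y2, h2⟩ := hsurj y3
  obtain ⟨y1, h1⟩ := hsurj y2
  obtain ⟨y0, h0⟩ := hsurj y1
  obtain ⟨y5, h4⟩ : ∃ y5, y5 = f.F^[q] y - p := ⟨_, rfl⟩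
  obtain ⟨y6, h5⟩ : ∃ y6, y6 = f.F^[q] y5 - p := ⟨_, rfl⟩
  have gp : ∀ x, 0 < |f.F^[q] x - p - x| := by
    intro x
    obtain ⟨S1, S2⟩ := f.lt_of hrot q p
    rw [abs_pos]
    rcases lt_or_gt_of_ne hth with h | h
    · have := S1 (by linarith) x; linarith
    · have := S2 (by linarith) x; linarith
  have G := fun x0 x1 x2 x3 x4 => f.gaps hirr hrot hB q p hth hbest x0 x1 x2 x3 x4
  have G0 := G y0 y1 y2 y3 y h0 h1 h2 h3
  have G1 := G y1 y2 y3 y y5 h1 h2 h3 h4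
  have G2 := G y2 y3 y y5 y6 h2 h3 h4 h5
  have P0 := gp y0
  have P1 := gp y1
  have P2 := gp y2
  have P3 := gp y3
  have P4 := gp y
  have P5 := gp y5
  have m1 := hy y1
  have m2 := hy y2
  have m3 := hy y3
  have m5 := hy y5
  rw [← h0] at P0
  rw [← h1] at P1
  rw [← h2] at P2
  rw [← h3] at P3
  rw [← h4] at P4
  rw [← h5] at P5
  rw [← h4, ← h1] at m1
  rw [← h4, ← h2] at m2
  rw [← h4, ← h3] at m3
  rw [← h4, ← h5] at m5
  obtain ⟨R3, R2, R1⟩ := gap_arith hB1 P0 P1 P2 P3 P4 P5 m3 m5 G0 G1 G2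
  rw [← hE] at R2 R1
  obtain ⟨C, hC⟩ : ∃ C, C = B * E * (E + 1) := ⟨_, rfl⟩
  rw [← hC] at hCE R1 ⊢
  have hC0 : 0 < C := by linarith
  have R3' : |y - y3| ≤ C * |y5 - y| := R3.trans (by gcongr; linarith)
  have R2' : |y3 - y2| ≤ C * |y5 - y| := R2.trans (by gcongr)
  have fin : ∀ u v w : ℝ, 0 < u → 0 < v → 0 < w → w ≤ u → w ≤ v → u ≤ C * w → v ≤ C * w →
      C⁻¹ ≤ u / v ∧ u / v ≤ C := by
    intro u v w hu hv hw a1 a2 a3 a4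
    constructor
    · rw [inv_eq_one_div, div_le_div_iff₀ hC0 hv]
      nlinarith
    · rw [div_le_iff₀ hv]
      nlinarith
  refine ⟨fun j => match j with
    | 0 => 0
    | 1 => y1
    | 2 => y2
    | 3 => y3
    | 4 => y
    | _ => y5, ?_, ?_⟩
  · intro j hj1 hj4
    interval_cases j
    · exact h1
    · exact h2
    · exact h3
    · exact h4
  · intro i hi2 hi4
    interval_cases i
    · show C⁻¹ ≤ |y1 - y2| / |y3 - y2| ∧ |y1 - y2| / |y3 - y2| ≤ C
      rw [abs_sub_comm y1 y2]
      exact fin _ _ _ P1 P2 P4 m1 m2 R1 R2'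
    · show C⁻¹ ≤ |y2 - y3| / |y - y3| ∧ |y2 - y3| / |y - y3| ≤ C
      rw [abs_sub_comm y2 y3]
      exact fin _ _ _ P2 P3 P4 m2 m3 R2' R3'
    · show C⁻¹ ≤ |y3 - y| / |y5 - y| ∧ |y3 - y| / |y5 - y| ≤ C
      rw [abs_sub_comm y3 y]
      exact fin _ _ _ P3 P4 P4 m3 le_rfl R3' (by nlinarith)
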